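/- arXiv:2301.13440 — 2 statements merged into one kernel-verified Lean document; each statement's English description precedes it below -/
import Mathlib

section
/- Let H be a finite group with a normal subgroup N of odd order such that |H : N| = 2, let x ∈ H be an involution, and let θ ∈ Irr(N) satisfy θ^x = θ̄ ≠ θ. Then ε(θ^H) = 1; equivalently, ∑_{y ∈ C_N(x)} θ(y) = |C_N(x)|. -/
open scoped BigOperators
attribute [local instance] Classical.propDecidable

noncomputable section

/-- `χ` is an irreducible complex character of the group `G`. -/
def IsIrrChar (G : Type) [Group G] (χ : G → ℂ) : Prop :=
  ∃ V : FDRep ℂ G, CategoryTheory.Simple V ∧ χ = V.character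

/-- Frobenius–Schur indicator of a class function. -/
def FS (G : Type) [Group G] [Fintype G] (χ : G → ℂ) : ℂ :=
  (∑ g : G, χ (g ^ 2)) / (Fintype.card G : ℂ)

/-- The character of `G` induced from a character of the subgroup `H`. -/
def indChar {G : Type} [Group G] [Fintype G] (H : Subgroup G) (θ : ↥H → ℂ) : G → ℂ :=
  fun g => (∑ s : G, if h : s * g * s⁻¹ ∈ H then θ ⟨s * g * s⁻¹, h⟩ else 0) / (Nat.card H : ℂ)

/-- The conjugate character `θ^g : n ↦ θ (g n g⁻¹)` of a character of a subgroup `H`. -/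
def conjChar {G : Type} [Group G] (H : Subgroup G) (θ : ↥H → ℂ) (g : G) : ↥H → ℂ :=
  fun n => if h : g * (n : G) * g⁻¹ ∈ H then θ ⟨g * (n : G) * g⁻¹, h⟩ else 0

/-- The complex conjugate character. -/
def starChar {α : Type} (θ : α → ℂ) : α → ℂ := fun a => (starRingEnd ℂ) (θ a)

open Module in
open scoped ComplexOrder in
lemma aux_char_inv {G V : Type*} [Group G] [Fintype G] [AddCommGroup V] [Module ℂ V]
    [FiniteDimensional ℂ V] (ρ : Representation ℂ G V) (g : G) :
    ρ.character g⁻¹ = (starRingEnd ℂ) (ρ.character g) := by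
  let b := Module.finBasis ℂ V
  let A : G → Matrix (Fin (finrank ℂ V)) (Fin (finrank ℂ V)) ℂ := fun g => LinearMap.toMatrix b b (ρ g)
  have hA : ∀ g h, A (g * h) = A g * A h := fun g h => by
    simp only [A, map_mul, LinearMap.toMatrix_mul]
  have hA1 : A 1 = 1 := by simp only [A, map_one, LinearMap.toMatrix_one]
  have ht : ∀ g, ρ.character g = (A g).trace := fun g => LinearMap.trace_eq_matrix_trace ℂ b (ρ g)
  let M := ∑ h, (A h).conjTranspose * A h
  have hM : M.PosDef := by
    have : M = 1 + ∑ h ∈ Finset.univ.erase (1 : G), (A h).conjTranspose * A h := by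
      change ∑ h, (A h).conjTranspose * A h = _
      rw [← Finset.add_sum_erase _ _ (Finset.mem_univ (1 : G))]
      simp [hA1]
    rw [this]
    refine Matrix.PosDef.add_posSemidef Matrix.PosDef.one ?_
    exact Matrix.posSemidef_sum _ fun h _ => Matrix.posSemidef_conjTranspose_mul_self _
  have hu : IsUnit M := hM.isUnit
  have hinv : (A g).conjTranspose * M = M * A g⁻¹ := by
    have h1 : (A g).conjTranspose * M * A g = M := by
      simp only [M, Finset.mul_sum, Finset.sum_mul]
      rw [← Equiv.sum_comp (Equiv.mulRight g) (fun h => (A h).conjTranspose * A h)]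
      refine Finset.sum_congr rfl fun h _ => ?_
      simp [hA, Matrix.mul_assoc]
    have h2 : A g * A g⁻¹ = 1 := by rw [← hA, mul_inv_cancel, hA1]
    calc (A g).conjTranspose * M = (A g).conjTranspose * M * (A g * A g⁻¹) := by rw [h2, mul_one]
      _ = _ := by rw [← mul_assoc, h1]
  have hd : IsUnit M.det := (Matrix.isUnit_iff_isUnit_det M).1 hu
  rw [ht, ht]
  have : A g⁻¹ = M⁻¹ * ((A g).conjTranspose * M) := by
    rw [hinv, ← mul_assoc, Matrix.nonsing_inv_mul _ hd, one_mul]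
  rw [this, Matrix.trace_mul_comm, mul_assoc, Matrix.mul_nonsing_inv _ hd, mul_one,
    Matrix.trace_conjTranspose]
  rfl

open Module in
lemma aux_trace_comm {V : Type*} [AddCommGroup V] [Module ℂ V]
    [FiniteDimensional ℂ V] (f g : V →ₗ[ℂ] V) :
    LinearMap.trace ℂ _ ((TensorProduct.comm ℂ V V).toLinearMap ∘ₗ TensorProduct.map f g) =
      LinearMap.trace ℂ V (f * g) := by
  let b := Module.finBasis ℂ V
  rw [LinearMap.trace_eq_matrix_trace ℂ (b.tensorProduct b), LinearMap.trace_eq_matrix_trace ℂ b,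
    LinearMap.toMatrix_mul, Matrix.trace_mul_comm]
  simp only [Matrix.trace, Matrix.diag, Matrix.mul_apply, LinearMap.toMatrix_apply, Fintype.sum_prod_type]
  simp [mul_comm]

open Module in
lemma aux_twist {G V : Type*} [Group G] [Fintype G] [AddCommGroup V] [Module ℂ V]
    [FiniteDimensional ℂ V] (ρ : Representation ℂ G V) (σ : G →* G) (hσ : ∀ g, σ (σ g) = g)
    (h1 : (Nat.card G : ℂ)⁻¹ * ∑ g : G, ρ.character g * ρ.character (σ g) = 1) :
    ((Nat.card G : ℂ)⁻¹ * ∑ g : G, ρ.character (g * σ g)) ^ 2 = 1 := by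
  have hc : (Nat.card G : ℂ) ≠ 0 := by exact_mod_cast Nat.card_pos.ne'
  let _ : Invertible (Nat.card G : ℂ) := invertibleOfNonzero hc
  let _ : Invertible (Fintype.card G : ℂ) := by rw [Fintype.card_eq_nat_card]; assumption
  let R : Representation ℂ G (TensorProduct ℂ V V) := Representation.tprod ρ (MonoidHom.comp ρ σ)
  have hR : ∀ g, R g = TensorProduct.map (ρ g) (ρ (σ g)) := fun g => rfl
  have hfr : finrank ℂ R.invariants = 1 := by
    have := Representation.card_inv_mul_sum_char_eq_finrank R
    have h2 : R.character = fun g => ρ.character g * ρ.character (σ g) :=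
      Representation.char_tensor ρ (MonoidHom.comp ρ σ)
    rw [h2, h1] at this
    exact_mod_cast this.symm
  let T := (TensorProduct.comm ℂ V V).toLinearMap
  have hTT : ∀ w, T (T w) = w := fun w => by simp [T]
  have hTR : ∀ g w, R g (T w) = T (R (σ g) w) := by
    intro g w
    induction w with
    | zero => simp
    | tmul a c => simp [hR, T, hσ]
    | add a c ha hc => simp only [map_add, ha, hc]
  have hTinv : ∀ w ∈ R.invariants, T w ∈ R.invariants := fun w hw g => by
    rw [hTR, hw]
  obtain ⟨v, hv0, hv⟩ := finrank_eq_one_iff'.1 hfr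
  obtain ⟨c, hcv⟩ := hv ⟨T v, hTinv _ v.2⟩
  have hcv' : T v = c • (v : TensorProduct ℂ V V) := (congrArg Subtype.val hcv).symm
  have hc2 : c ^ 2 = 1 := by
    have h3 := hTT v
    rw [hcv', map_smul, hcv', smul_smul] at h3
    have hv0' : (v : TensorProduct ℂ V V) ≠ 0 := fun h => hv0 (Subtype.ext h)
    have h4 : (c * c - 1) • (v : TensorProduct ℂ V V) = 0 := by rw [sub_smul, h3, one_smul, sub_self]
    have := (smul_eq_zero.1 h4).resolve_right hv0'
    linear_combination this
  have hTP : T ∘ₗ R.averageMap = c • R.averageMap := by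
    refine TensorProduct.ext' fun a b => ?_
    obtain ⟨d, hd⟩ := hv ⟨_, R.averageMap_invariant (a ⊗ₜ b)⟩
    have hd' : d • (v : TensorProduct ℂ V V) = R.averageMap (a ⊗ₜ b) := congrArg Subtype.val hd
    change T (R.averageMap (a ⊗ₜ b)) = c • R.averageMap (a ⊗ₜ b)
    rw [← hd', map_smul, hcv', smul_comm]
  have htr : LinearMap.trace ℂ _ (T ∘ₗ R.averageMap) = c := by
    rw [hTP, map_smul, (R.isProj_averageMap).trace, hfr]; simp
  have htr2 : LinearMap.trace ℂ _ (T ∘ₗ R.averageMap) =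
      (Nat.card G : ℂ)⁻¹ * ∑ g : G, ρ.character (g * σ g) := by
    have : R.averageMap = (Nat.card G : ℂ)⁻¹ • ∑ g, R g := by
      simp [GroupAlgebra.average, map_sum]
    rw [this, LinearMap.comp_smul, map_smul, smul_eq_mul]
    congr 1
    have h5 : T ∘ₗ (∑ g, R g) = ∑ g, T ∘ₗ R g := by
      refine TensorProduct.ext' fun a b => ?_
      simp [LinearMap.sum_apply]
    rw [h5, map_sum]
    refine Finset.sum_congr rfl fun g _ => ?_
    rw [hR, aux_trace_comm, ← map_mul]; rfl
  rw [← htr2, htr, hc2]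

lemma aux_twist_nonneg {G V : Type*} [Group G] [Fintype G] [AddCommGroup V] [Module ℂ V]
    [FiniteDimensional ℂ V] (ρ : Representation ℂ G V) (C : Subgroup G) :
    ∃ k : ℕ, (∑ g : C, ρ.character g) = Nat.card C * (k : ℂ) := by
  have hc : (Nat.card C : ℂ) ≠ 0 := by exact_mod_cast Nat.card_pos.ne'
  let _ : Invertible (Nat.card C : ℂ) := invertibleOfNonzero hc
  have := Representation.card_inv_mul_sum_char_eq_finrank (MonoidHom.comp ρ C.subtype : Representation ℂ C V)
  refine ⟨Module.finrank ℂ (Representation.invariants (MonoidHom.comp ρ C.subtype : Representation ℂ C V)), ?_⟩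
  rw [← this, mul_inv_cancel_left₀ hc]; rfl

/-- nontrivial irreducible: sum of character is zero -/
lemma aux_sum_zero {G : Type} [Group G] [Fintype G] (V : FDRep ℂ G) [CategoryTheory.Simple V]
    (hnr : starChar V.character ≠ V.character) : ∑ g, V.character g = 0 := by
  have hc : (Nat.card G : ℂ) ≠ 0 := by exact_mod_cast Nat.card_pos.ne'
  let _ : Invertible (Nat.card G : ℂ) := invertibleOfNonzero hc
  let _ : Invertible (Fintype.card G : ℂ) := by rw [Fintype.card_eq_nat_card]; assumption
  let W : FDRep ℂ G := FDRep.of (Representation.trivial ℂ G ℂ)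
  have hW : ∀ g, W.character g = 1 := fun g => by
    change LinearMap.trace ℂ ℂ (Representation.trivial ℂ G ℂ g) = 1
    have : Representation.trivial ℂ G ℂ g = 1 := by ext; simp
    rw [this, LinearMap.trace_one]; simp
  have hWs : CategoryTheory.Simple W := by
    rw [FDRep.simple_iff_char_is_norm_one]
    simp [hW]
  have h := FDRep.char_orthonormal V W
  simp only [hW, mul_one] at h
  by_cases hi : Nonempty (V ≅ W)
  · exfalso
    apply hnr
    rw [FDRep.char_iso hi.some]
    ext g
    simp [starChar, hW]
  · rw [if_neg hi] at h
    exact (mul_eq_zero.1 h).resolve_left (inv_ne_zero hc)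

lemma aux_sq_inj {G : Type*} [Group G] [Fintype G] (hodd : Odd (Nat.card G)) :
    Function.Bijective (fun g : G => g ^ 2) :=
  (powCoprime (G := G) (n := 2) (Nat.coprime_two_right.2 hodd)).bijective

lemma aux_count {G : Type*} [Group G] [Fintype G] (hodd : Odd (Nat.card G))
    (σ : G →* G) (hσ : ∀ g, σ (σ g) = g) (C : Subgroup G) (hC : ∀ g, g ∈ C ↔ σ g = g)
    (χ : G → ℂ) (hχ : ∀ g h, χ (h * g * h⁻¹) = χ g) :
    (Nat.card C : ℂ) * ∑ g, χ (g * σ g) = Nat.card G * ∑ k : C, χ k := by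
  let f : G × C → G := fun p => p.1 * p.2 * (σ p.1)⁻¹
  have hkey : ∀ p q : G × C, f p = f q → q.1⁻¹ * p.1 ∈ C ∧
      (q.2 : G) = (q.1⁻¹ * p.1) * p.2 * (q.1⁻¹ * p.1)⁻¹ := by
    rintro ⟨a, k, hk⟩ ⟨b, l, hl⟩ h
    have hk' := (hC k).1 hk
    have hl' := (hC l).1 hl
    simp only [f] at h ⊢
    obtain ⟨c, rfl⟩ : ∃ c, a = b * c := ⟨b⁻¹ * a, by group⟩
    have h1 : l = c * k * (σ c)⁻¹ := by
      have : b * (c * k * (σ c)⁻¹) * (σ b)⁻¹ = b * l * (σ b)⁻¹ := by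
        rw [← h, map_mul]; group
      simpa using this.symm
    have h2 : l = c * k * c⁻¹ := by
      apply (aux_sq_inj hodd).1
      change l ^ 2 = (c * k * c⁻¹) ^ 2
      have h3 : σ l = σ c * k * c⁻¹ := by
        conv_lhs => rw [h1]
        simp [hσ, hk']
      calc l ^ 2 = l * σ l := by rw [hl', sq]
        _ = _ := by rw [h3]; nth_rewrite 1 [h1]; rw [sq]; group
    have h4 : σ c = c := by
      rw [h1] at h2
      simpa using h2
    have h5 : b⁻¹ * (b * c) = c := by group
    rw [h5]
    exact ⟨(hC c).2 h4, h2⟩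
  have hle : ∀ g ∈ (Finset.univ : Finset G),
      (Finset.univ.filter fun p => f p = g).card ≤ Nat.card C := by
    intro g _
    rcases (Finset.univ.filter fun p => f p = g).eq_empty_or_nonempty with h | ⟨q, hq⟩
    · simp [h]
    · rw [Nat.card_eq_fintype_card, ← Finset.card_univ]
      have hq' := (Finset.mem_filter.1 hq).2
      have hp : ∀ p ∈ Finset.univ.filter (fun p => f p = g), f p = f q := fun p hp =>
        (Finset.mem_filter.1 hp).2.trans hq'.symm
      refine Finset.card_le_card_of_injOn
        (fun p => if h : q.1⁻¹ * p.1 ∈ C then ⟨_, h⟩ else 1) (fun _ _ => Finset.mem_coe.2 (Finset.mem_univ _)) ?_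
      intro p hp1 p' hp2 h
      have e1 := hkey p q (hp p (Finset.mem_coe.1 hp1))
      have e2 := hkey p' q (hp p' (Finset.mem_coe.1 hp2))
      simp only [dif_pos e1.1, dif_pos e2.1, Subtype.mk.injEq] at h
      have h6 : p.1 = p'.1 := mul_left_cancel h
      have h7 : (p.2 : G) = p'.2 := by
        have := e1.2.symm.trans e2.2
        rw [h6] at this
        simpa using this
      exact Prod.ext h6 (Subtype.ext h7)
  have hsum : ∑ g : G, (Finset.univ.filter fun p => f p = g).card = ∑ g : G, Nat.card C := by
    rw [← Finset.card_eq_sum_card_fiberwise (f := f) (s := Finset.univ) (t := Finset.univ)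
      (fun _ _ => Finset.mem_coe.2 (Finset.mem_univ _))]
    simp [Fintype.card_prod, Nat.card_eq_fintype_card]
  have hfib := (Finset.sum_eq_sum_iff_of_le hle).1 hsum
  have h1 : ∑ p : G × C, χ (f p * σ (f p)) = (Nat.card C : ℂ) * ∑ g, χ (g * σ g) := by
    rw [← Finset.sum_fiberwise (s := Finset.univ) (g := f), Finset.mul_sum]
    refine Finset.sum_congr rfl fun g hg => ?_
    rw [← hfib g hg, ← nsmul_eq_mul]
    refine Finset.sum_eq_card_nsmul fun p hp => ?_
    rw [(Finset.mem_filter.1 hp).2]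
  have hoddC : Odd (Nat.card C) := hodd.of_dvd_nat (Subgroup.card_subgroup_dvd_card C)
  rw [← h1, Fintype.sum_prod_type]
  have h2 : ∀ a : G, ∑ k : C, χ (f (a, k) * σ (f (a, k))) = ∑ k : C, χ k := by
    intro a
    rw [← (aux_sq_inj hoddC).sum_comp (fun k : C => χ k)]
    refine Finset.sum_congr rfl fun k _ => ?_
    change _ = χ ((k ^ 2 : C) : G)
    rw [← hχ ((k ^ 2 : C) : G) a]
    congr 1
    have := (hC k).1 k.2
    simp [f, hσ, this, sq]
    group
  simp [h2, Nat.card_eq_fintype_card]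

lemma aux_coset {H : Type} [Group H] [Fintype H] (N : Subgroup H) (hidx : N.index = 2)
    (x : H) (hx : x ∉ N) (F : H → ℂ) :
    ∑ h, F h = ∑ n : N, F n + ∑ n : N, F (n * x) := by
  rw [← Finset.sum_filter_add_sum_filter_not Finset.univ (fun h => h ∈ N)]
  congr 1
  · exact Finset.sum_subtype _ (by simp) _
  · symm
    refine Finset.sum_bij (fun (n : N) _ => (n : H) * x) ?_ ?_ ?_ ?_
    · intro n _
      simp [Subgroup.mul_mem_iff_of_index_two hidx, hx]
    · intro a _ b _ h
      exact Subtype.ext (mul_right_cancel h)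
    · intro h hh
      have hh' : h ∉ N := (Finset.mem_filter.1 hh).2
      have : h * x⁻¹ ∈ N := by
        rw [Subgroup.mul_mem_iff_of_index_two hidx]
        simp [hh', hx]
      exact ⟨⟨_, this⟩, Finset.mem_univ _, by simp⟩
    · intros; rfl

lemma aux_FS {H : Type} [Group H] [Fintype H] (N : Subgroup H) (hidx : N.index = 2)
    (x : H) (hx : x ∉ N) (θ : N → ℂ) (F : H → ℂ)
    (hF : F = fun g => if h : g ∈ N then θ ⟨g, h⟩ else 0) :
    FS H (indChar N θ) = (Nat.card N : ℂ)⁻¹ *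
      (∑ n : N, F ((n : H) ^ 2) + ∑ n : N, F (((n : H) * x) ^ 2)) := by
  have hcH : (Fintype.card H : ℂ) ≠ 0 := by exact_mod_cast Fintype.card_ne_zero
  rw [← aux_coset N hidx x hx (fun h => F (h ^ 2))]
  have h1 : ∀ g, indChar N θ g = (∑ s, F (s * g * s⁻¹)) / (Nat.card N : ℂ) := by
    intro g; rw [hF]; rfl
  simp only [FS, h1]
  rw [← Finset.sum_div, Finset.sum_comm]
  have h2 : ∀ s : H, ∑ h : H, F (s * h ^ 2 * s⁻¹) = ∑ h, F (h ^ 2) := by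
    intro s
    rw [← Equiv.sum_comp (MulAut.conj s).toEquiv (fun h => F (h ^ 2))]
    refine Finset.sum_congr rfl fun h _ => ?_
    congr 1
    simp
  simp only [h2, Finset.sum_const, Finset.card_univ, nsmul_eq_mul]
  field_simp

/-- Let `N ⊴ H` of odd order and index 2, `x ∈ H` an involution, and
`θ ∈ Irr(N)` with `θ^x = θ̄ ≠ θ`. Then `ε(θ^H) = 1`; equivalently,
`∑_{y ∈ C_N(x)} θ(y) = |C_N(x)|`. -/
theorem stmt7 {H : Type} [Group H] [Fintype H] (N : Subgroup H) [N.Normal]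
    (hodd : Odd (Nat.card N)) (hidx : N.index = 2)
    (x : H) (hx2 : x ^ 2 = 1) (hx1 : x ≠ 1)
    (θ : ↥N → ℂ) (hθ : IsIrrChar ↥N θ)
    (hconj : conjChar N θ x = starChar θ) (hnr : starChar θ ≠ θ) :
    FS H (indChar N θ) = 1 ∧
    (∑ n ∈ Finset.univ.filter (fun n : ↥N => (n : H) * x = x * (n : H)), θ n) =
      ((Finset.univ.filter (fun n : ↥N => (n : H) * x = x * (n : H))).card : ℂ) := by
  obtain ⟨V, hV, rfl⟩ := hθ
  have hxN : x ∉ N := by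
    intro hx
    have h1 : orderOf (⟨x, hx⟩ : N) = 2 := by
      apply orderOf_eq_prime
      · exact Subtype.ext hx2
      · exact fun h => hx1 (congrArg Subtype.val h)
    have h2 : 2 ∣ Nat.card N := h1 ▸ orderOf_dvd_natCard _
    exact (Nat.not_even_iff_odd.2 hodd) (even_iff_two_dvd.2 h2)
  have hxx : x * x = 1 := by rw [← sq, hx2]
  have hxi : x⁻¹ = x := inv_eq_of_mul_eq_one_left hxx
  let σ : N →* N := (MulAut.conjNormal x : MulAut N).toMonoidHom
  have hσv : ∀ n : N, ((σ n : N) : H) = x * n * x⁻¹ := fun n => MulAut.conjNormal_apply x n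
  have hσ : ∀ n, σ (σ n) = n := by
    intro n
    apply Subtype.ext
    rw [hσv, hσv, hxi]
    calc x * (x * (n : H) * x) * x = (x * x) * n * (x * x) := by group
      _ = n := by rw [hxx]; simp
  let C : Subgroup N := MonoidHom.eqLocus σ (MonoidHom.id N)
  have hC : ∀ g, g ∈ C ↔ σ g = g := fun g => Iff.rfl
  let ρ : Representation ℂ N V := V.ρ
  have hρ : ∀ g, V.character g = ρ.character g := fun g => rfl
  have hcN : (Nat.card N : ℂ) ≠ 0 := by exact_mod_cast Nat.card_pos.ne'
  have hcC : (Nat.card C : ℂ) ≠ 0 := by exact_mod_cast Nat.card_pos.ne'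
  let _ : Invertible (Nat.card N : ℂ) := invertibleOfNonzero hcN
  have hconj' : ∀ n : N, V.character (σ n) = V.character n⁻¹ := by
    intro n
    have h1 := congrFun hconj n
    have hm : x * (n : H) * x⁻¹ ∈ N := by rw [← hσv]; exact (σ n).2
    simp only [conjChar, starChar, dif_pos hm] at h1
    have h2 : σ n = ⟨x * (n : H) * x⁻¹, hm⟩ := Subtype.ext (hσv n)
    rw [h2, h1, hρ n⁻¹, aux_char_inv, hρ]
  have hn1 : (Nat.card N : ℂ)⁻¹ * ∑ g : N, ρ.character g * ρ.character (σ g) = 1 := by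
    have h := FDRep.char_orthonormal V V
    rw [if_pos ⟨CategoryTheory.Iso.refl V⟩] at h
    simp only [← hρ, hconj']
    exact h
  have hS := aux_twist ρ σ hσ hn1
  have hcount := aux_count hodd σ hσ C hC ρ.character (fun g h => Representation.char_conj ρ g h)
  obtain ⟨k, hk⟩ := aux_twist_nonneg ρ C
  rw [hk] at hcount
  have hsum : ∑ g, ρ.character (g * σ g) = Nat.card N * k := by
    apply mul_left_cancel₀ hcC
    rw [hcount]; ring
  have hk1 : k = 1 := by
    rw [hsum, inv_mul_cancel_left₀ hcN] at hS
    have : k ^ 2 = 1 := by exact_mod_cast hS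
    simpa using this
  subst hk1
  constructor
  · rw [aux_FS N hidx x hxN V.character _ rfl]
    have h1 : ∀ n : N, (if h : (n : H) ^ 2 ∈ N then V.character ⟨(n : H) ^ 2, h⟩ else 0) =
        V.character (n ^ 2) := fun n => dif_pos (n ^ 2).2
    have h2 : ∀ n : N, (if h : ((n : H) * x) ^ 2 ∈ N then V.character ⟨((n : H) * x) ^ 2, h⟩ else 0) =
        V.character (n * σ n) := by
      intro n
      have h3 : ((n : H) * x) ^ 2 = ((n * σ n : N) : H) := by
        rw [Subgroup.coe_mul, hσv, hxi, sq]; group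
      have hm : ((n : H) * x) ^ 2 ∈ N := h3 ▸ (n * σ n).2
      rw [dif_pos hm]
      congr 1
      exact Subtype.ext h3
    simp only [h1, h2]
    rw [(aux_sq_inj hodd).sum_comp V.character, aux_sum_zero V hnr, zero_add]
    simp only [hρ]
    rw [hsum]
    simp [hcN]
  · have hmem : ∀ n : N, n ∈ Finset.univ.filter (fun n : ↥N => (n : H) * x = x * (n : H)) ↔ n ∈ C := by
      intro n
      rw [hC, ← Subtype.coe_inj, hσv, mul_inv_eq_iff_eq_mul]
      simp [eq_comm]
    rw [Finset.sum_subtype _ hmem]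
    have hcard : (Finset.univ.filter (fun n : ↥N => (n : H) * x = x * (n : H))).card = Nat.card C := by
      rw [Nat.card_eq_fintype_card]
      exact (Fintype.card_of_subtype _ hmem).symm
    rw [hcard]
    simpa [hρ] using hk
end
end

section
/- Let E be a finite 2-group, D ≤ E a subgroup of index 2, Q a cyclic group of order 3, and G = Q ⋊ E the semidirect product in which D acts trivially on Q and every element of E∖D acts on Q by inversion. Fix a nontrivial irreducible character θ of Q, and for λ ∈ Irr(D) let χ_λ := (θ × λ)^G be the character of G induced from the irreducible character θ × λ of the subgroup Q × D. Then: (1) each χ_λ is an irreducible character of G of degree 2λ(1); (2) the map λ ↦ χ_λ is a bijection from Irr(D) onto the set of irreducible characters of G whose kernel does not contain Q; and (3) χ_λ is real-valued if and only if λ^t = λ̄ for some (equivalently, every) t ∈ E∖D. -/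
open scoped BigOperators
attribute [local instance] Classical.propDecidable

noncomputable section

instance semidirectProductFintype {N G : Type} [Group N] [Group G] [Fintype N] [Fintype G]
    (φ : G →* MulAut N) : Fintype (N ⋊[φ] G) :=
  Fintype.ofEquiv (N × G)
    { toFun := fun p => ⟨p.1, p.2⟩
      invFun := fun x => (x.left, x.right)
      left_inv := fun _ => rfl
      right_inv := fun _ => rfl }

set_option linter.unusedSimpArgs false

open CategoryTheory in
theorem schur_scalar {G : Type} [Group G] (V : FDRep ℂ G) [Simple V]
    (f : V →ₗ[ℂ] V) (hf : ∀ g, f ∘ₗ V.ρ g = V.ρ g ∘ₗ f) :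
    ∃ c : ℂ, f = c • LinearMap.id := by
  let F : V ⟶ V := ⟨InducedCategory.homMk (ModuleCat.ofHom f), fun g ↦ by
    ext1
    exact hf g⟩
  obtain ⟨c, hc⟩ := (finrank_eq_one_iff_of_nonzero' (𝟙 V) (id_nonzero V)).mp
    (finrank_endomorphism_simple_eq_one ℂ V) F
  refine ⟨c, ?_⟩
  have h2 : F.hom.hom.hom = (c • 𝟙 V : V ⟶ V).hom.hom.hom := by rw [hc]
  exact h2

theorem irr_norm {G : Type} [Group G] [Fintype G] {χ : G → ℂ} (h : IsIrrChar G χ) :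
    ∑ g : G, χ g * χ g⁻¹ = Nat.card G := by
  obtain ⟨V, hV, rfl⟩ := h
  exact (FDRep.simple_iff_char_is_norm_one V).1 hV

theorem irr_of_norm {G : Type} [Group G] [Fintype G] {W : Type} [AddCommGroup W] [Module ℂ W]
    [Module.Finite ℂ W] (ρ : Representation ℂ G W) {χ : G → ℂ}
    (hχ : ∀ g, χ g = LinearMap.trace ℂ W (ρ g))
    (h : ∑ g : G, χ g * χ g⁻¹ = Nat.card G) : IsIrrChar G χ := by
  have e : χ = (FDRep.of ρ).character := funext fun g => hχ g
  refine ⟨FDRep.of ρ, ?_, e⟩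
  rw [FDRep.simple_iff_char_is_norm_one, ← e, h]

theorem irr_conj {G : Type} [Group G] {χ : G → ℂ} (h : IsIrrChar G χ) (a b : G) :
    χ (b * a * b⁻¹) = χ a := by
  obtain ⟨V, hV, rfl⟩ := h
  simp

theorem irr_one_ne {G : Type} [Group G] [Fintype G] {χ : G → ℂ} (h : IsIrrChar G χ) :
    χ 1 ≠ 0 := by
  intro h0
  have hn := irr_norm h
  obtain ⟨V, hV, rfl⟩ := h
  rw [FDRep.char_one] at h0
  have h0' : Module.finrank ℂ V = 0 := by exact_mod_cast h0
  have hs : Subsingleton V := Module.finrank_zero_iff.1 h0'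
  have : ∀ g, V.character g = 0 := fun g => by
    have : V.ρ g = 0 := by ext v; exact Subsingleton.elim _ _
    simp [FDRep.character, this]
  simp [this] at hn
  exact absurd hn.symm (by simp [Nat.card_eq_fintype_card])

theorem theta_facts {Q : Type} [Group Q] [Fintype Q] (hQcyc : IsCyclic Q) (θ : Q → ℂ)
    (hθ : IsIrrChar Q θ) : θ 1 = 1 ∧ ∀ a b, θ (a * b) = θ a * θ b := by
  have hn := irr_norm hθ
  have h10 := irr_one_ne hθ
  obtain ⟨V, hV, rfl⟩ := hθ
  have hcomm : ∀ a b : Q, a * b = b * a := fun a b => by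
    obtain ⟨z, hz⟩ := hQcyc.exists_generator
    obtain ⟨i, rfl⟩ := hz a
    obtain ⟨j, rfl⟩ := hz b
    simp only [← zpow_add, add_comm]
  have hs : ∀ q, ∃ c : ℂ, V.ρ q = c • LinearMap.id := fun q => schur_scalar V _ fun g => by
    have := congrArg V.ρ (hcomm q g)
    rwa [map_mul, map_mul] at this
  choose c hc using hs
  set n : ℂ := (Module.finrank ℂ V : ℂ) with hnn
  have hch : ∀ q, V.character q = c q * n := fun q => by
    simp [FDRep.character, hc, hnn]
  have hn0 : n ≠ 0 := by rwa [FDRep.char_one] at h10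
  have hc1 : c 1 = 1 := by
    have := hch 1
    rw [FDRep.char_one] at this
    exact mul_right_cancel₀ hn0 (by rw [← this, one_mul])
  have hcm : ∀ a b, c (a * b) = c a * c b := fun a b => by
    have h1 : V.ρ (a * b) = (c a * c b) • LinearMap.id := by
      rw [map_mul, hc, hc]; ext v; simp [mul_smul, smul_comm (c a) (c b)]
    have := hch (a * b)
    rw [FDRep.character, h1] at this
    rw [map_smul, LinearMap.trace_id, smul_eq_mul] at this
    exact (mul_right_cancel₀ hn0 this).symm
  have hn1 : n = 1 := by
    have : ∀ g, V.character g * V.character g⁻¹ = n * n := fun g => by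
      rw [hch, hch]
      have := hcm g g⁻¹
      rw [mul_inv_cancel, hc1] at this
      linear_combination - n * n * this
    simp only [this, Finset.sum_const, Finset.card_univ, Nat.card_eq_fintype_card, nsmul_eq_mul] at hn
    have h3 : (Fintype.card Q : ℂ) ≠ 0 := by simp
    have h4 : n * n = 1 := mul_left_cancel₀ h3 (by rw [hn, mul_one])
    rw [hnn] at h4 ⊢
    have h5 : Module.finrank ℂ V * Module.finrank ℂ V = 1 := by exact_mod_cast h4
    exact_mod_cast Nat.eq_one_of_mul_eq_one_left h5
  simp [hch, hc1, hn1, hcm]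

theorem theta_K {Q : Type} [Group Q] [Fintype Q] (hQ3 : Fintype.card Q = 3) (θ : Q → ℂ)
    (hθ1 : θ ≠ fun _ => 1) (h1 : θ 1 = 1) (hm : ∀ a b, θ (a * b) = θ a * θ b) :
    (∀ x, 1 + θ x + θ x⁻¹ = if x = 1 then 3 else 0) ∧ (∀ x, θ x * θ x⁻¹ = 1) ∧
    (∀ x, (starRingEnd ℂ) (θ x) = θ x⁻¹) ∧ (∀ x : Q, x⁻¹ = x * x) := by
  have h3 : ∀ x : Q, x ^ 3 = 1 := fun x => by rw [← hQ3]; exact pow_card_eq_one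
  have hx : ∀ x : Q, x⁻¹ = x * x := fun x => by
    rw [inv_eq_iff_mul_eq_one, ← mul_assoc, ← pow_three']; exact h3 x
  have hi : ∀ x, θ x * θ x⁻¹ = 1 := fun x => by rw [← hm, mul_inv_cancel, h1]
  refine ⟨fun x => ?_, hi, fun x => ?_, hx⟩
  · split_ifs with h
    · subst h; simp [h1]; norm_num
    · have hne : θ x ≠ 1 := by
        intro hx1
        apply hθ1
        funext y
        have hp : Nat.card Q = 3 := by rw [Nat.card_eq_fintype_card, hQ3]
        have : Fact (Nat.Prime 3) := ⟨Nat.prime_three⟩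
        have := mem_zpowers_of_prime_card hp h (g' := y)
        rw [← mem_powers_iff_mem_zpowers] at this
        obtain ⟨k, rfl⟩ := this
        simp only
        induction k with
        | zero => simpa using h1
        | succ k ih => rw [pow_succ, hm, ih, hx1, one_mul]
      have h4 : θ x * (θ x * θ x) = 1 := by rw [← hm, ← hx, hi]
      rw [hx, hm]
      have : (θ x - 1) * (1 + θ x + θ x * θ x) = 0 := by linear_combination h4
      exact (mul_eq_zero.1 this).resolve_left (sub_ne_zero.2 hne)
  · have h4 : θ x ^ 3 = 1 := by rw [pow_three, ← hm, ← hx, hi]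
    have hn : ‖θ x‖ = 1 := Complex.norm_eq_one_of_pow_eq_one h4 (by norm_num)
    have h5 : θ x * (starRingEnd ℂ) (θ x) = 1 := by
      rw [Complex.mul_conj, Complex.normSq_eq_norm_sq, hn]; norm_num
    have h6 : θ x ≠ 0 := fun h => by simp [h] at h5
    exact mul_left_cancel₀ h6 (by rw [h5, hi])

/-- extension by zero -/
def ext0 {E : Type} [Group E] {M : Type*} [Zero M] (D : Subgroup E) (f : ↥D → M) (e : E) : M :=
  if h : e ∈ D then f ⟨e, h⟩ else 0

theorem ind2_exists {Q E : Type} [Group Q] [Group E]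
    (D : Subgroup E) (hD : D.index = 2)
    (φ : E →* MulAut Q) (hφD : ∀ d : E, d ∈ D → φ d = 1)
    (hφinv : ∀ e : E, e ∉ D → ∀ q : Q, φ e q = q⁻¹)
    (θ : Q → ℂ) (h1 : θ 1 = 1) (hm : ∀ a b, θ (a * b) = θ a * θ b)
    (t : E) (ht : t ∉ D) {V : Type} [AddCommGroup V] [Module ℂ V] [Module.Finite ℂ V]
    (ρ : Representation ℂ ↥D V) :
    ∃ A : Representation ℂ (Q ⋊[φ] E) (V × V), ∀ g : Q ⋊[φ] E,
      LinearMap.trace ℂ (V × V) (A g) =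
        θ g.left * ext0 D (fun d => LinearMap.trace ℂ V (ρ d)) g.right +
        θ g.left⁻¹ * ext0 D (fun d => LinearMap.trace ℂ V (ρ d)) (t * g.right * t⁻¹) := by
  have hmem := fun a b : E => Subgroup.mul_mem_iff_of_index_two (a := a) (b := b) hD
  set R : E → (V →ₗ[ℂ] V) := ext0 D (fun d => ρ d) with hR
  have hR0 : ∀ e, e ∉ D → R e = 0 := fun e he => by simp [hR, ext0, he]
  have hR1 : R 1 = LinearMap.id := by simp [hR, ext0, D.one_mem]; exact map_one ρ
  have hRm : ∀ x y z, z = x * y → x ∈ D → y ∈ D → ∀ v, R z v = R x (R y v) := fun x y z hz hx hy v => by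
    subst hz
    have : (⟨x * y, D.mul_mem hx hy⟩ : ↥D) = ⟨x, hx⟩ * ⟨y, hy⟩ := rfl
    simp only [hR, ext0, hx, hy, D.mul_mem hx hy, dif_pos, this, map_mul]
    rfl
  have hRt : ∀ e, LinearMap.trace ℂ V (R e) = ext0 D (fun d => LinearMap.trace ℂ V (ρ d)) e := by
    intro e
    by_cases he : e ∈ D <;> simp [hR, ext0, he]
  have hti : t⁻¹ ∉ D := by simpa using ht
  let B : Q ⋊[φ] E → (V × V →ₗ[ℂ] V × V) := fun g =>
    LinearMap.inl ℂ V V ∘ₗ (θ g.left • R g.right) ∘ₗ LinearMap.fst ℂ V V +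
    LinearMap.inl ℂ V V ∘ₗ (θ g.left • R (g.right * t⁻¹)) ∘ₗ LinearMap.snd ℂ V V +
    LinearMap.inr ℂ V V ∘ₗ (θ g.left⁻¹ • R (t * g.right)) ∘ₗ LinearMap.fst ℂ V V +
    LinearMap.inr ℂ V V ∘ₗ (θ g.left⁻¹ • R (t * g.right * t⁻¹)) ∘ₗ LinearMap.snd ℂ V V
  have hB1 : B 1 = 1 := by
    apply LinearMap.ext
    rintro ⟨v, w⟩
    simp [B, h1, hR1, hR0 _ ht, hR0 _ hti]
  have hBm : ∀ g g', B (g * g') = B g * B g' := by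
    rintro ⟨q, e⟩ ⟨q', e'⟩
    apply LinearMap.ext
    rintro ⟨v, w⟩
    have hBa : ∀ q e v w, B ⟨q, e⟩ (v, w) = (θ q • (R e v + R (e * t⁻¹) w),
        θ q⁻¹ • (R (t * e) v + R (t * e * t⁻¹) w)) := by
      intro q e v w
      simp [B, smul_add]
    have hmul : (⟨q, e⟩ * ⟨q', e'⟩ : Q ⋊[φ] E) = ⟨q * φ e q', e * e'⟩ := rfl
    rw [Module.End.mul_apply, hmul, hBa, hBa, hBa]
    by_cases he : e ∈ D <;> by_cases he' : e' ∈ D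
    · have m1 := hRm e e' (e * e') rfl he he'
      have m2 := hRm (t * e * t⁻¹) (t * e' * t⁻¹) (t * (e * e') * t⁻¹) (by group)
        (by simp [hmem, ht, he]) (by simp [hmem, ht, he'])
      rw [m1, m2, hR0 (e * e' * t⁻¹) (by simp [hmem, *]), hR0 (e * t⁻¹) (by simp [hmem, *]),
        hR0 (e' * t⁻¹) (by simp [hmem, *]), hR0 (t * (e * e')) (by simp [hmem, *]),
        hR0 (t * e) (by simp [hmem, *]), hR0 (t * e') (by simp [hmem, *]), hφD e he]
      simp [hm, smul_smul, mul_comm]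
    · have m1 := hRm e (e' * t⁻¹) (e * e' * t⁻¹) (by group) he (by simp [hmem, *])
      have m2 := hRm (t * e * t⁻¹) (t * e') (t * (e * e')) (by group)
        (by simp [hmem, ht, he]) (by simp [hmem, ht, he'])
      rw [m1, m2, hR0 (e * e') (by simp [hmem, *]), hR0 (e * t⁻¹) (by simp [hmem, *]),
        hR0 (e') (by simp [*]), hR0 (t * (e * e') * t⁻¹) (by simp [hmem, *]),
        hR0 (t * e) (by simp [hmem, *]), hR0 (t * e' * t⁻¹) (by simp [hmem, *]), hφD e he]
      simp [hm, smul_smul, mul_comm]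
    · have m1 := hRm (e * t⁻¹) (t * e' * t⁻¹) (e * e' * t⁻¹) (by group) (by simp [hmem, *])
        (by simp [hmem, *])
      have m2 := hRm (t * e) e' (t * (e * e')) (by group)
        (by simp [hmem, ht, he]) he'
      rw [m1, m2, hR0 (e * e') (by simp [hmem, *]), hR0 e he,
        hR0 (e' * t⁻¹) (by simp [hmem, *]), hR0 (t * (e * e') * t⁻¹) (by simp [hmem, *]),
        hR0 (t * e * t⁻¹) (by simp [hmem, *]), hR0 (t * e') (by simp [hmem, *]), hφinv e he]
      simp [hm, smul_smul, mul_comm]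
    · have m1 := hRm (e * t⁻¹) (t * e') (e * e') (by group) (by simp [hmem, *])
        (by simp [hmem, *])
      have m2 := hRm (t * e) (e' * t⁻¹) (t * (e * e') * t⁻¹) (by group)
        (by simp [hmem, ht, he]) (by simp [hmem, *])
      rw [m1, m2, hR0 (e * e' * t⁻¹) (by simp [hmem, *]), hR0 e he,
        hR0 e' he', hR0 (t * (e * e')) (by simp [hmem, *]),
        hR0 (t * e * t⁻¹) (by simp [hmem, *]), hR0 (t * e' * t⁻¹) (by simp [hmem, *]), hφinv e he]
      simp [hm, smul_smul, mul_comm]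
  refine ⟨⟨⟨B, hB1⟩, hBm⟩, fun g => ?_⟩
  have hif : LinearMap.fst ℂ V V ∘ₗ LinearMap.inl ℂ V V = LinearMap.id := by ext; simp
  have his : LinearMap.snd ℂ V V ∘ₗ LinearMap.inl ℂ V V = 0 := by ext; simp
  have hrf : LinearMap.fst ℂ V V ∘ₗ LinearMap.inr ℂ V V = 0 := by ext; simp
  have hrs : LinearMap.snd ℂ V V ∘ₗ LinearMap.inr ℂ V V = LinearMap.id := by ext; simp
  change LinearMap.trace ℂ (V × V) (B g) = _
  simp only [B, map_add]
  have hc : ∀ (f : V × V →ₗ[ℂ] V) (g : V →ₗ[ℂ] V × V),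
      LinearMap.trace ℂ (V × V) (g ∘ₗ f) = LinearMap.trace ℂ V (f ∘ₗ g) :=
    fun f g => LinearMap.trace_comp_comm' f g
  rw [hc, hc, hc, hc]
  simp only [LinearMap.comp_assoc, hif, his, hrf, hrs]
  simp [hRt]


theorem ext0_mem {E : Type} [Group E] {M : Type*} [Zero M] (D : Subgroup E) (f : ↥D → M) {e : E}
    (h : e ∈ D) : ext0 D f e = f ⟨e, h⟩ := dif_pos h

theorem ext0_not_mem {E : Type} [Group E] {M : Type*} [Zero M] (D : Subgroup E) (f : ↥D → M)
    {e : E} (h : e ∉ D) : ext0 D f e = 0 := dif_neg h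

theorem ext0_conj {E : Type} [Group E] (D : Subgroup E) (lam : ↥D → ℂ)
    (hl : ∀ a b : ↥D, lam (b * a * b⁻¹) = lam a) (f : E) (hf : f ∈ D) (e : E) :
    ext0 D lam (f * e * f⁻¹) = ext0 D lam e := by
  have hiff : f * e * f⁻¹ ∈ D ↔ e ∈ D := by
    rw [Subgroup.mul_mem_cancel_right _ (D.inv_mem hf), Subgroup.mul_mem_cancel_left _ hf]
  by_cases he : e ∈ D
  · rw [ext0_mem D lam he, ext0_mem D lam (hiff.2 he)]
    exact hl ⟨e, he⟩ ⟨f, hf⟩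
  · rw [ext0_not_mem D lam he, ext0_not_mem D lam (fun h => he (hiff.1 h))]

/-- the value of the induced character -/
def chiF {Q E : Type} [Group Q] [Group E] (φ : E →* MulAut Q) (D : Subgroup E) (θ : Q → ℂ) (t : E)
    (lam : ↥D → ℂ) (g : Q ⋊[φ] E) : ℂ :=
  θ g.left * ext0 D lam g.right + θ g.left⁻¹ * ext0 D lam (t * g.right * t⁻¹)

theorem indChar_eq {Q E : Type} [Group Q] [Group E] [Fintype Q] [Fintype E]
    (D : Subgroup E) (hD : D.index = 2)
    (φ : E →* MulAut Q) (hφD : ∀ d : E, d ∈ D → φ d = 1)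
    (hφinv : ∀ e : E, e ∉ D → ∀ q : Q, φ e q = q⁻¹)
    (θ : Q → ℂ) (hcomm : ∀ a b : Q, a * b = b * a)
    (t : E) (ht : t ∉ D) (lam : ↥D → ℂ) (hl : ∀ a b : ↥D, lam (b * a * b⁻¹) = lam a) :
    indChar (Subgroup.comap (SemidirectProduct.rightHom : Q ⋊[φ] E →* E) D)
        (fun g => θ (g : Q ⋊[φ] E).left *
          lam ⟨SemidirectProduct.rightHom (g : Q ⋊[φ] E), g.2⟩) = chiF φ D θ t lam := by
  have hmem := fun a b : E => Subgroup.mul_mem_iff_of_index_two (a := a) (b := b) hD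
  set H := Subgroup.comap (SemidirectProduct.rightHom : Q ⋊[φ] E →* E) D with hH
  have hHi : H.index = 2 := by
    rw [hH, Subgroup.index_comap_of_surjective _ SemidirectProduct.rightHom_surjective, hD]
  have hHm : ∀ s : Q ⋊[φ] E, s ∈ H ↔ s.right ∈ D := fun s => Iff.rfl
  funext g
  obtain ⟨q, e⟩ := g
  have key : ∀ s : Q ⋊[φ] E, (if h : s * ⟨q, e⟩ * s⁻¹ ∈ H then
      θ (s * ⟨q, e⟩ * s⁻¹ : Q ⋊[φ] E).left *
          lam ⟨SemidirectProduct.rightHom (s * ⟨q, e⟩ * s⁻¹ : Q ⋊[φ] E), h⟩ else 0) =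
      if s ∈ H then θ q * ext0 D lam e else θ q⁻¹ * ext0 D lam (t * e * t⁻¹) := by
    rintro ⟨p, f⟩
    have hs : (⟨p, f⟩ * ⟨q, e⟩ * ⟨p, f⟩⁻¹ : Q ⋊[φ] E) =
        ⟨p * φ f q * φ (f * e) (φ f⁻¹ p⁻¹), f * e * f⁻¹⟩ := rfl
    rw [hs]
    have hiff : f * e * f⁻¹ ∈ D ↔ e ∈ D := by
      simp [hmem]; tauto
    have hiff2 : t * e * t⁻¹ ∈ D ↔ e ∈ D := by
      simp [hmem]; tauto
    simp only [hHm]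
    by_cases he : e ∈ D
    · have hfe : f * e * f⁻¹ ∈ D := hiff.2 he
      have h1 : p * φ f q * φ (f * e) (φ f⁻¹ p⁻¹) = φ f q := by
        have : φ (f * e) (φ f⁻¹ p⁻¹) = p⁻¹ := by
          rw [← MulAut.mul_apply, ← map_mul, hφD _ hfe]; rfl
        rw [this, hcomm p, mul_inv_cancel_right]
      rw [dif_pos hfe]
      simp only [h1]
      have h2 : lam ⟨SemidirectProduct.rightHom (⟨φ f q, f * e * f⁻¹⟩ : Q ⋊[φ] E), hfe⟩ =
        ext0 D lam (f * e * f⁻¹) := (ext0_mem D lam hfe).symm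
      rw [h2]
      by_cases hf : f ∈ D
      · rw [if_pos hf, ext0_conj D lam hl f hf, hφD f hf]; rfl
      · rw [if_neg hf, hφinv f hf]
        have := ext0_conj D lam hl (f * t⁻¹) (by simp [hmem, hf, ht]) (t * e * t⁻¹)
        rw [← this]
        congr 2
        group
    · have hfe : ¬ f * e * f⁻¹ ∈ D := fun h => he (hiff.1 h)
      rw [dif_neg hfe, ext0_not_mem D lam he, ext0_not_mem D lam (fun h => he (hiff2.1 h))]
      simp
  unfold indChar chiF
  simp only
  rw [Finset.sum_congr rfl (fun s _ => key s), Finset.sum_ite, Finset.sum_const, Finset.sum_const]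
  have c1 : (Finset.univ.filter (fun s : Q ⋊[φ] E => s ∈ H)).card = Nat.card H := by
    rw [Nat.card_eq_fintype_card, Fintype.card_subtype]
  have c2 : (Finset.univ.filter (fun s : Q ⋊[φ] E => ¬ s ∈ H)).card = Nat.card H := by
    have h3 := Finset.card_filter_add_card_filter_not (s := (Finset.univ : Finset (Q ⋊[φ] E))) (fun s => s ∈ H)
    have h4 := H.card_mul_index
    rw [hHi, Nat.card_eq_fintype_card (α := Q ⋊[φ] E), ← Finset.card_univ] at h4
    rw [c1] at h3
    omega
  rw [c1, c2, nsmul_eq_mul, nsmul_eq_mul, ← mul_add, mul_div_cancel_left₀]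
  have : Nat.card H ≠ 0 := Nat.card_pos.ne'
  exact_mod_cast this

theorem sum_sd {Q E : Type} [Group Q] [Group E] [Fintype Q] [Fintype E] (φ : E →* MulAut Q)
    (f : Q ⋊[φ] E → ℂ) : ∑ g, f g = ∑ e : E, ∑ q : Q, f ⟨q, e⟩ := by
  rw [Finset.sum_comm, ← Fintype.sum_prod_type' (f := fun q e => f ⟨q, e⟩)]
  exact Fintype.sum_equiv SemidirectProduct.equivProd _ _ fun x => rfl

theorem chiF_norm {Q E : Type} [Group Q] [Group E] [Fintype Q] [Fintype E]
    (hQ3 : Fintype.card Q = 3)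
    (D : Subgroup E) (hD : D.index = 2)
    (φ : E →* MulAut Q) (hφD : ∀ d : E, d ∈ D → φ d = 1)
    (θ : Q → ℂ) (hm : ∀ a b, θ (a * b) = θ a * θ b)
    (hK : ∀ x, 1 + θ x + θ x⁻¹ = if x = 1 then 3 else 0) (hi : ∀ x, θ x * θ x⁻¹ = 1)
    (hx : ∀ x : Q, x⁻¹ = x * x)
    (t : E) (lam : ↥D → ℂ) :
    ∑ g : Q ⋊[φ] E, chiF φ D θ t lam g * chiF φ D θ t lam g⁻¹ =
      6 * ∑ d : ↥D, lam d * lam d⁻¹ := by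
  have hmem := fun a b : E => Subgroup.mul_mem_iff_of_index_two (a := a) (b := b) hD
  set L := ext0 D lam with hL
  have hs : ∑ q : Q, θ q⁻¹ = ∑ q : Q, θ q := Fintype.sum_equiv (Equiv.inv Q) _ _ fun x => rfl
  have hs0 : ∑ q : Q, θ q = 0 := by
    have := Finset.sum_congr (rfl : (Finset.univ : Finset Q) = _) (fun x _ => hK x)
    rw [Finset.sum_add_distrib, Finset.sum_add_distrib, hs] at this
    simp [hQ3] at this
    linear_combination (1 / 2 : ℂ) * this
  have e1 : ∀ e : E, ∑ q : Q, chiF φ D θ t lam ⟨q, e⟩ * chiF φ D θ t lam (⟨q, e⟩ : Q ⋊[φ] E)⁻¹ =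
      3 * (L e * L e⁻¹) + 3 * (L (t * e * t⁻¹) * L (t * e * t⁻¹)⁻¹) := by
    intro e
    by_cases he : e ∈ D
    · have hinv : ∀ q, (⟨q, e⟩ : Q ⋊[φ] E)⁻¹ = ⟨q⁻¹, e⁻¹⟩ := fun q => by
        have : (⟨q, e⟩ : Q ⋊[φ] E)⁻¹ = ⟨φ e⁻¹ q⁻¹, e⁻¹⟩ := rfl
        rw [this, hφD _ (D.inv_mem he)]; rfl
      have : ∀ q, chiF φ D θ t lam ⟨q, e⟩ * chiF φ D θ t lam (⟨q, e⟩ : Q ⋊[φ] E)⁻¹ =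
          (L e * L e⁻¹ + L (t * e * t⁻¹) * L (t * e * t⁻¹)⁻¹) +
          θ q⁻¹ * (L e * L (t * e * t⁻¹)⁻¹) + θ q * (L (t * e * t⁻¹) * L e⁻¹) := by
        intro q
        rw [hinv]
        simp only [chiF, inv_inv, ← hL]
        have h1 := hi q
        have h2 : θ q⁻¹ = θ q * θ q := by rw [← hm, ← hx]
        have h3 : θ q = θ q⁻¹ * θ q⁻¹ := by rw [← hm, ← hx, inv_inv]
        have h4 : t * e⁻¹ * t⁻¹ = (t * e * t⁻¹)⁻¹ := by group
        rw [h4]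
        linear_combination (L e * L e⁻¹ + L (t * e * t⁻¹) * L (t * e * t⁻¹)⁻¹) * h1 -
          (L e * L (t * e * t⁻¹)⁻¹) * h2 - (L (t * e * t⁻¹) * L e⁻¹) * h3
      simp only [this, Finset.sum_add_distrib, ← Finset.sum_mul, hs, hs0]
      simp [hQ3]
      ring
    · have h2 : t * e * t⁻¹ ∉ D := by simp [hmem, he]
      simp [chiF, hL, ext0_not_mem D lam he, ext0_not_mem D lam h2]
  rw [sum_sd, Finset.sum_congr rfl (fun e _ => e1 e), Finset.sum_add_distrib, ← Finset.mul_sum,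
    ← Finset.mul_sum]
  have h2 : ∑ e : E, L (t * e * t⁻¹) * L (t * e * t⁻¹)⁻¹ = ∑ e : E, L e * L e⁻¹ :=
    Fintype.sum_equiv (MulAut.conj t).toEquiv _ _ fun x => rfl
  have h3 : ∑ e : E, L e * L e⁻¹ = ∑ d : ↥D, lam d * lam d⁻¹ := by
    have h4 : ∀ e, e ∉ Finset.univ.filter (fun e => e ∈ D) → L e * L e⁻¹ = 0 := fun e he => by
      rw [hL, ext0_not_mem D lam (by simpa using he), zero_mul]
    rw [← Finset.sum_subset (Finset.subset_univ (Finset.univ.filter (fun e => e ∈ D)))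
      (fun e _ he => h4 e he)]
    rw [Finset.sum_subtype (p := fun e => e ∈ D) _ (by simp)]
    refine Finset.sum_congr rfl fun d _ => ?_
    rw [hL, ext0_mem D lam d.2, ext0_mem D lam (D.inv_mem d.2)]
    rfl
  rw [h2, h3]
  ring

theorem card_sd {Q E : Type} [Group Q] [Group E] [Fintype Q] [Fintype E]
    (hQ3 : Fintype.card Q = 3) (D : Subgroup E) (hD : D.index = 2)
    (φ : E →* MulAut Q) : ((Nat.card (Q ⋊[φ] E) : ℕ) : ℂ) = 6 * (Nat.card D : ℂ) := by
  have := D.card_mul_index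
  rw [SemidirectProduct.card, ← this, hD, Nat.card_eq_fintype_card, hQ3]
  push_cast
  ring

theorem surj_aux {Q E : Type} [Group Q] [Group E] [Fintype Q] [Fintype E]
    (hQ3 : Fintype.card Q = 3)
    (D : Subgroup E) (hD : D.index = 2)
    (φ : E →* MulAut Q) (hφD : ∀ d : E, d ∈ D → φ d = 1)
    (hφinv : ∀ e : E, e ∉ D → ∀ q : Q, φ e q = q⁻¹)
    (θ : Q → ℂ) (hm : ∀ a b, θ (a * b) = θ a * θ b)
    (hK : ∀ x, 1 + θ x + θ x⁻¹ = if x = 1 then 3 else 0) (hi : ∀ x, θ x * θ x⁻¹ = 1)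
    (hx : ∀ x : Q, x⁻¹ = x * x) (hcomm : ∀ a b : Q, a * b = b * a)
    (t : E) (ht : t ∉ D) (χ : Q ⋊[φ] E → ℂ) (hχ : IsIrrChar (Q ⋊[φ] E) χ)
    (hker : ∃ q : Q, χ (SemidirectProduct.inl q) ≠ χ 1) :
    ∃ lam : ↥D → ℂ, IsIrrChar ↥D lam ∧ χ = chiF φ D θ t lam := by
  have hnorm := irr_norm hχ
  have hconj := irr_conj hχ
  obtain ⟨V, hV, hVχ⟩ := hχ
  have htr : ∀ g, χ g = LinearMap.trace ℂ V (V.ρ g) := fun g => by rw [hVχ]; rfl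
  -- conjugating the normal subgroup
  have hgq : ∀ (g : Q ⋊[φ] E) (q : Q), g * SemidirectProduct.inl q =
      SemidirectProduct.inl (φ g.right q) * g := by
    rintro ⟨p, f⟩ q
    ext
    · simp [hcomm p]
    · simp
  set P0 : V →ₗ[ℂ] V := ∑ q : Q, V.ρ (SemidirectProduct.inl q) with hP0
  obtain ⟨c, hc⟩ := schur_scalar V P0 (by
    intro g
    change P0 * V.ρ g = V.ρ g * P0
    rw [hP0, Finset.sum_mul, Finset.mul_sum]
    symm
    refine Fintype.sum_equiv (φ g.right).toEquiv _ _ fun q => ?_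
    rw [← map_mul, ← map_mul, hgq]
    rfl)
  have hP00 : P0 = 0 := by
    by_cases hc0 : c = 0
    · rw [hc, hc0, zero_smul]
    · exfalso
      obtain ⟨q, hq⟩ := hker
      apply hq
      have h2 : P0 * V.ρ (SemidirectProduct.inl q) = P0 := by
        rw [hP0, Finset.sum_mul]
        refine Fintype.sum_equiv (Equiv.mulRight q) _ _ fun p => ?_
        rw [← map_mul, ← map_mul]; rfl
      rw [hc] at h2
      have h3 : V.ρ (SemidirectProduct.inl q) = LinearMap.id := by
        refine LinearMap.ext fun v => ?_
        have := LinearMap.congr_fun h2 v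
        exact smul_right_injective _ hc0 this
      rw [htr, htr, h3, map_one]; rfl
  have hmk : ∀ q e, (⟨q, e⟩ : Q ⋊[φ] E) = SemidirectProduct.inl q * SemidirectProduct.inr e :=
    fun q e => SemidirectProduct.mk_eq_inl_mul_inr e q
  have hsum0 : ∀ e, ∑ q : Q, χ ⟨q, e⟩ = 0 := fun e => by
    have : LinearMap.trace ℂ V (P0 * V.ρ (SemidirectProduct.inr e)) = 0 := by
      rw [hP00, zero_mul, map_zero]
    rw [hP0, Finset.sum_mul, map_sum] at this
    rw [← this]
    refine Finset.sum_congr rfl fun q _ => ?_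
    rw [htr, hmk, map_mul]
  set P : V →ₗ[ℂ] V := (3 : ℂ)⁻¹ • ∑ q : Q, θ q⁻¹ • V.ρ (SemidirectProduct.inl q) with hP
  have hPq : ∀ p, P * V.ρ (SemidirectProduct.inl p) = θ p • P := by
    intro p
    rw [hP, smul_mul_assoc, Finset.sum_mul, smul_comm, Finset.smul_sum (r := θ p)]
    congr 1
    refine Fintype.sum_equiv (Equiv.mulRight p) _ _ fun q => ?_
    rw [Equiv.coe_mulRight, smul_mul_assoc, ← map_mul, ← map_mul, smul_smul]
    congr 1
    rw [mul_inv_rev, hm, ← mul_assoc, hi, one_mul]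
  have hPP : P * P = P := by
    conv_lhs => rw [hP]
    rw [← hP, mul_smul_comm, Finset.mul_sum]
    have : ∀ q ∈ Finset.univ, P * θ q⁻¹ • V.ρ (SemidirectProduct.inl q) = P := fun q _ => by
      rw [mul_smul_comm, hPq, smul_smul, mul_comm, hi, one_smul]
    rw [Finset.sum_congr rfl this]
    simp only [Finset.sum_const, Finset.card_univ, hQ3]
    rw [← Nat.cast_smul_eq_nsmul ℂ, smul_smul]
    norm_num
  have hPd : ∀ d ∈ D, P * V.ρ (SemidirectProduct.inr d) = V.ρ (SemidirectProduct.inr d) * P := by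
    intro d hd
    rw [hP, smul_mul_assoc, mul_smul_comm, Finset.sum_mul, Finset.mul_sum]
    congr 1
    refine Finset.sum_congr rfl fun q _ => ?_
    rw [smul_mul_assoc, mul_smul_comm, ← map_mul, ← map_mul, hgq]
    simp [hφD d hd]
  let π : V →ₗ[ℂ] LinearMap.range P := P.rangeRestrict
  let ι : LinearMap.range P →ₗ[ℂ] V := (LinearMap.range P).subtype
  have hιπ : ι ∘ₗ π = P := rfl
  have hPv : ∀ v, P (P v) = P v := fun v => LinearMap.congr_fun hPP v
  let τ : Representation ℂ ↥D (LinearMap.range P) :=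
    { toFun := fun d => π ∘ₗ V.ρ (SemidirectProduct.inr (d : E)) ∘ₗ ι
      map_one' := by
        apply LinearMap.ext
        rintro ⟨_, v, rfl⟩
        apply Subtype.ext
        simp [π, ι, hPv]
      map_mul' := by
        intro a b
        apply LinearMap.ext
        rintro ⟨_, v, rfl⟩
        apply Subtype.ext
        have h3 := LinearMap.congr_fun (hPd a a.2)
        have h4 := LinearMap.congr_fun (hPd b b.2)
        simp only [Module.End.mul_apply] at h3 h4
        simp [π, ι, h3, h4, hPv] }
  set lam : ↥D → ℂ := fun d => LinearMap.trace ℂ _ (τ d) with hlam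
  have hlv : ∀ d : ↥D, lam d = 3⁻¹ * ∑ q : Q, θ q⁻¹ * χ ⟨q, d⟩ := by
    intro d
    have : lam d = LinearMap.trace ℂ V (V.ρ (SemidirectProduct.inr (d : E)) ∘ₗ P) := by
      have e1 := LinearMap.trace_comp_comm' (R := ℂ) π (V.ρ (SemidirectProduct.inr (d : E)) ∘ₗ ι)
      rw [LinearMap.comp_assoc, hιπ] at e1
      exact e1.symm
    rw [this, ← Module.End.mul_eq_comp, ← hPd d d.2, hP, smul_mul_assoc, map_smul, Finset.sum_mul,
      map_sum, smul_eq_mul]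
    congr 1
    refine Finset.sum_congr rfl fun q _ => ?_
    rw [smul_mul_assoc, map_smul, ← map_mul, ← hmk, htr, smul_eq_mul]
  have hmem := fun a b : E => Subgroup.mul_mem_iff_of_index_two (a := a) (b := b) hD
  have hform : χ = chiF φ D θ t lam := by
    funext g
    obtain ⟨q, e⟩ := g
    by_cases he : e ∈ D
    · have h2 : t * e * t⁻¹ ∈ D := by simp [hmem, he, ht]
      simp only [chiF, ext0_mem D lam he, ext0_mem D lam h2, hlv]
      have h3 : ∑ p : Q, θ p⁻¹ * χ ⟨p, t * e * t⁻¹⟩ = ∑ p : Q, θ p * χ ⟨p, e⟩ := by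
        refine Fintype.sum_equiv (Equiv.inv Q) _ _ fun p => ?_
        rw [Equiv.inv_apply, ← hconj ⟨p⁻¹, e⟩ (SemidirectProduct.inr t)]
        congr 2
        ext
        · simp [hφinv t ht]
        · simp
      rw [h3]
      have h4 : θ q * (3⁻¹ * ∑ p : Q, θ p⁻¹ * χ ⟨p, e⟩) +
          θ q⁻¹ * (3⁻¹ * ∑ p : Q, θ p * χ ⟨p, e⟩) =
          3⁻¹ * ∑ p : Q, (1 + θ (q * p⁻¹) + θ (q * p⁻¹)⁻¹) * χ ⟨p, e⟩ - 3⁻¹ * ∑ p : Q, χ ⟨p, e⟩ := by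
        simp only [Finset.mul_sum, ← Finset.sum_add_distrib, ← Finset.sum_sub_distrib]
        refine Finset.sum_congr rfl fun p _ => ?_
        rw [mul_inv_rev, inv_inv, hm, hm]
        ring
      rw [h4, hsum0]
      simp only [hK, mul_inv_eq_one, ite_mul, zero_mul]
      simp
    · have h2 : t * e * t⁻¹ ∉ D := by simp [hmem, he]
      simp only [chiF, ext0_not_mem D lam he, ext0_not_mem D lam h2, mul_zero, add_zero]
      have h3 : ∀ p : Q, χ ⟨p, e⟩ = χ ⟨1, e⟩ := fun p => by
        rw [← hconj ⟨p, e⟩ (SemidirectProduct.inl p)]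
        congr 1
        ext
        · simp only [SemidirectProduct.mul_left, SemidirectProduct.left_inl,
            SemidirectProduct.right_inl, map_one, MulAut.one_apply, one_mul,
            SemidirectProduct.mul_right, ← map_inv, hφinv e he, inv_inv]
          rw [← hx, inv_mul_cancel]
        · simp
      have h4 := hsum0 e
      rw [Finset.sum_congr rfl (fun p _ => h3 p)] at h4
      rw [Finset.sum_const, Finset.card_univ, hQ3, nsmul_eq_mul] at h4
      rw [h3]
      exact (mul_eq_zero.1 h4).resolve_left (by norm_num)
  refine ⟨lam, irr_of_norm τ (fun _ => rfl) ?_, hform⟩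
  have h5 := chiF_norm hQ3 D hD φ hφD θ hm hK hi hx t lam
  rw [← hform, hnorm, card_sd hQ3 D hD] at h5
  exact (mul_left_cancel₀ (by norm_num) h5).symm

/-- Let `E` be a finite 2-group, `D ≤ E` of index 2, `Q` cyclic of order 3 and
`G = Q ⋊ E` where `D` centralizes `Q` and `E∖D` inverts `Q`. Fix a nontrivial `θ ∈ Irr(Q)` and for
`λ ∈ Irr(D)` let `χ_λ = (θ × λ)^G`, induced from the subgroup `Q ⋊ D = Q × D`. Then:
(1) each `χ_λ` is irreducible of degree `2·λ(1)`;
(2) `λ ↦ χ_λ` is a bijection from `Irr(D)` onto the irreducible characters of `G` whose kernel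
does not contain `Q`; and
(3) `χ_λ` is real-valued iff `λ^t = λ̄` for some (equivalently, every) `t ∈ E∖D`. -/
theorem stmt12 {Q E : Type} [Group Q] [Group E] [Fintype Q] [Fintype E]
    (hQcyc : IsCyclic Q) (hQ3 : Fintype.card Q = 3) (hE2 : IsPGroup 2 E)
    (D : Subgroup E) (hD : D.index = 2)
    (φ : E →* MulAut Q) (hφD : ∀ d : E, d ∈ D → φ d = 1)
    (hφinv : ∀ e : E, e ∉ D → ∀ q : Q, φ e q = q⁻¹)
    (θ : Q → ℂ) (hθ : IsIrrChar Q θ) (hθ1 : θ ≠ fun _ => 1)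
    (chi : (↥D → ℂ) → (Q ⋊[φ] E) → ℂ)
    (hchi : ∀ lam : ↥D → ℂ,
      chi lam = indChar (Subgroup.comap (SemidirectProduct.rightHom : Q ⋊[φ] E →* E) D)
        (fun g => θ (g : Q ⋊[φ] E).left *
          lam ⟨SemidirectProduct.rightHom (g : Q ⋊[φ] E), g.2⟩)) :
    (∀ lam : ↥D → ℂ, IsIrrChar ↥D lam →
      IsIrrChar (Q ⋊[φ] E) (chi lam) ∧ chi lam 1 = 2 * lam 1) ∧
    Set.BijOn chi {lam | IsIrrChar ↥D lam}
      {χ : (Q ⋊[φ] E) → ℂ | IsIrrChar (Q ⋊[φ] E) χ ∧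
        ∃ q : Q, χ (SemidirectProduct.inl q) ≠ χ 1} ∧
    (∀ lam : ↥D → ℂ, IsIrrChar ↥D lam →
      ((∀ g, (starRingEnd ℂ) (chi lam g) = chi lam g) ↔
        ∃ t : E, t ∉ D ∧ conjChar D lam t = starChar lam) ∧
      ((∀ g, (starRingEnd ℂ) (chi lam g) = chi lam g) ↔
        ∀ t : E, t ∉ D → conjChar D lam t = starChar lam)) := by
  have hcomm : ∀ a b : Q, a * b = b * a := fun a b => by
    obtain ⟨z, hz⟩ := hQcyc.exists_generator
    obtain ⟨i, rfl⟩ := hz a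
    obtain ⟨j, rfl⟩ := hz b
    simp only [← zpow_add, add_comm]
  obtain ⟨h1, hm⟩ := theta_facts hQcyc θ hθ
  obtain ⟨hK, hi, hstar, hx⟩ := theta_K hQ3 θ hθ1 h1 hm
  have hmem := fun a b : E => Subgroup.mul_mem_iff_of_index_two (a := a) (b := b) hD
  have hchiF : ∀ t, t ∉ D → ∀ lam : ↥D → ℂ, IsIrrChar ↥D lam → chi lam = chiF φ D θ t lam := by
    intro t ht lam hlam
    rw [hchi, indChar_eq D hD φ hφD hφinv θ hcomm t ht lam (irr_conj hlam)]
  obtain ⟨t, ht⟩ : ∃ t, t ∉ D := by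
    by_contra! h
    have : D = ⊤ := (Subgroup.eq_top_iff' D).2 h
    rw [this, Subgroup.index_top] at hD
    omega
  obtain ⟨q0, hq0⟩ : ∃ q : Q, q ≠ 1 := by
    have : Nontrivial Q := Fintype.one_lt_card_iff_nontrivial.1 (by omega)
    exact exists_ne 1
  have hsum : θ q0 + θ q0⁻¹ = -1 := by
    have := hK q0
    rw [if_neg hq0] at this
    linear_combination this
  have huniq : ∀ a b a' b' : ℂ, (∀ q, θ q * a + θ q⁻¹ * b = θ q * a' + θ q⁻¹ * b') →
      a = a' ∧ b = b' := by
    intro a b a' b' h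
    have e1 := h 1
    have e2 := h q0
    simp only [inv_one, h1, one_mul] at e1
    have hne : θ q0 - θ q0⁻¹ ≠ 0 := by
      intro h0
      have hh := hi q0
      have : (θ q0 - θ q0⁻¹) ^ 2 = -3 := by
        linear_combination (θ q0 + θ q0⁻¹ - 1) * hsum - 4 * hh
      rw [h0] at this
      norm_num at this
    have ha : a - a' = 0 := by
      refine (mul_eq_zero.1 (?_ : (θ q0 - θ q0⁻¹) * (a - a') = 0)).resolve_left hne
      linear_combination e2 - θ q0⁻¹ * e1
    exact ⟨sub_eq_zero.1 ha, by linear_combination e1 - ha⟩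
  have hirr : ∀ lam : ↥D → ℂ, IsIrrChar ↥D lam → IsIrrChar (Q ⋊[φ] E) (chi lam) := by
    intro lam hlam
    have hn := irr_norm hlam
    have hc := hchiF t ht lam hlam
    obtain ⟨V, hV, hVl⟩ := hlam
    obtain ⟨A, hA⟩ := ind2_exists D hD φ hφD hφinv θ h1 hm t ht V.ρ
    refine irr_of_norm A ?_ ?_
    · intro g
      rw [hA, hc, hVl]
      rfl
    · rw [hc, chiF_norm hQ3 D hD φ hφD θ hm hK hi hx t lam, hn, card_sd hQ3 D hD]
  have hinl : ∀ lam : ↥D → ℂ, IsIrrChar ↥D lam → ∀ q : Q,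
      chi lam (SemidirectProduct.inl q) = (θ q + θ q⁻¹) * lam 1 := by
    intro lam hlam q
    rw [hchiF t ht lam hlam]
    have h2 : ext0 D lam 1 = lam 1 := ext0_mem D lam D.one_mem
    simp only [chiF, SemidirectProduct.left_inl, SemidirectProduct.right_inl, mul_one,
      mul_inv_cancel, h2]
    ring
  have hone : ∀ lam : ↥D → ℂ, IsIrrChar ↥D lam → chi lam 1 = 2 * lam 1 := by
    intro lam hlam
    have := hinl lam hlam 1
    rw [map_one, inv_one, h1] at this
    rw [this]
    ring
  have hreal : ∀ lam : ↥D → ℂ, IsIrrChar ↥D lam → ∀ t, t ∉ D →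
      ((∀ g, (starRingEnd ℂ) (chi lam g) = chi lam g) ↔ conjChar D lam t = starChar lam) := by
    intro lam hlam t ht
    rw [hchiF t ht lam hlam]
    have hcj : ∀ d : ↥D, conjChar D lam t d = ext0 D lam (t * (d : E) * t⁻¹) := fun d => rfl
    constructor
    · intro h
      funext d
      rw [hcj, starChar]
      have := huniq (ext0 D lam d) (ext0 D lam (t * d * t⁻¹))
        ((starRingEnd ℂ) (ext0 D lam (t * d * t⁻¹))) ((starRingEnd ℂ) (ext0 D lam d)) (fun q => by
          have h3 := h ⟨q, d⟩
          simp only [chiF, map_add, map_mul, hstar, inv_inv] at h3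
          rw [← h3, add_comm])
      rw [this.2, ext0_mem D lam d.2]
    · rintro h ⟨q, e⟩
      by_cases he : e ∈ D
      · have h3 := congrFun h ⟨e, he⟩
        rw [hcj, starChar, ← ext0_mem D lam he] at h3
        simp only [chiF, map_add, map_mul, hstar, inv_inv]
        simp only at h3
        rw [h3, Complex.conj_conj, add_comm]
      · have h2 : t * e * t⁻¹ ∉ D := by simp [hmem, he]
        simp [chiF, ext0_not_mem D lam he, ext0_not_mem D lam h2]
  refine ⟨fun lam hlam => ⟨hirr lam hlam, hone lam hlam⟩, ⟨?_, ?_, ?_⟩, fun lam hlam => ⟨?_, ?_⟩⟩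
  · intro lam hlam
    refine ⟨hirr lam hlam, q0, ?_⟩
    rw [hinl lam hlam, hone lam hlam, hsum]
    intro h
    have h3 : (3 : ℂ) * lam 1 = 0 := by linear_combination - h
    exact irr_one_ne hlam ((mul_eq_zero.1 h3).resolve_left (by norm_num))
  · intro lam hlam mu hmu h
    rw [hchiF t ht lam hlam, hchiF t ht mu hmu] at h
    funext d
    have := (huniq (ext0 D lam d) (ext0 D lam (t * d * t⁻¹)) (ext0 D mu d)
      (ext0 D mu (t * d * t⁻¹)) fun q => congrFun h ⟨q, d⟩).1
    simpa only [ext0_mem D _ d.2] using this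
  · rintro χ ⟨hχ, hker⟩
    obtain ⟨lam, hlam, rfl⟩ := surj_aux hQ3 D hD φ hφD hφinv θ hm hK hi hx hcomm t ht χ hχ hker
    exact ⟨lam, hlam, hchiF t ht lam hlam⟩
  · constructor
    · intro h
      exact ⟨t, ht, (hreal lam hlam t ht).1 h⟩
    · rintro ⟨s, hs, h⟩
      exact (hreal lam hlam s hs).2 h
  · constructor
    · intro h s hs
      exact (hreal lam hlam s hs).1 h
    · intro h
      exact (hreal lam hlam t ht).2 (h t ht)
end
end
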